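/- Let 2 ≤ k < n and let H ∈ Herm(n) satisfy λ_k(H) < λ_{k+1}(H). Then H_Σ belongs to Σ_k and is the unique closest point of Σ_k to H in Frobenius distance: for every G ∈ Σ_k with G ≠ H_Σ one has ‖H − G‖ > ‖H − H_Σ‖. -/

import Mathlib

open Matrix

noncomputable section

/-- Sorted eigenvalues (increasing, counted with multiplicity) of a Hermitian matrix
(junk value for non-Hermitian matrices). -/
def eigs {n : ℕ} (H : Matrix (Fin n) (Fin n) ℂ) : Fin n → ℝ :=
  if hH : H.IsHermitian then hH.eigenvalues ∘ Tuple.sort hH.eigenvalues else fun _ => 0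

/-- Frobenius norm of a complex matrix. -/
def frobNorm {n : ℕ} (M : Matrix (Fin n) (Fin n) ℂ) : ℝ :=
  Real.sqrt (∑ a, ∑ b, ‖M a b‖ ^ 2)

/-- Mean of the lowest k eigenvalues. -/
def lamBar {n : ℕ} (k : ℕ) (H : Matrix (Fin n) (Fin n) ℂ) : ℝ :=
  (∑ j : Fin n, if (j : ℕ) < k then eigs H j else 0) / k

/-- Standard deviation of the lowest k eigenvalues. -/
def Dk {n : ℕ} (k : ℕ) (H : Matrix (Fin n) (Fin n) ℂ) : ℝ :=
  Real.sqrt ((∑ j : Fin n, if (j : ℕ) < k then (eigs H j - lamBar k H) ^ 2 else 0) / k)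

/-- `Λ_Σ`: the diagonal of sorted eigenvalues, with the lowest k entries replaced
by their mean. -/
def LambdaSigma {n : ℕ} (k : ℕ) (H : Matrix (Fin n) (Fin n) ℂ) : Matrix (Fin n) (Fin n) ℂ :=
  Matrix.diagonal fun i => if (i : ℕ) < k then (lamBar k H : ℂ) else (eigs H i : ℂ)

/-- The set Σ_k of k-fold ground-state degenerate Hermitian matrices:
λ₁ = … = λ_k < λ_{k+1}. -/
def SigmaSet (n k : ℕ) : Set (Matrix (Fin n) (Fin n) ℂ) :=
  {H | H.IsHermitian ∧ (∀ i j : Fin n, (i : ℕ) < k → (j : ℕ) < k → eigs H i = eigs H j) ∧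
    ∀ i j : Fin n, (i : ℕ) < k → (j : ℕ) = k → eigs H i < eigs H j}

theorem frobSq_eq {n : ℕ} (M : Matrix (Fin n) (Fin n) ℂ) :
    ((∑ a, ∑ b, ‖M a b‖ ^ 2 : ℝ) : ℂ) = (Mᴴ * M).trace := by
  rw [Finset.sum_comm]
  simp only [Matrix.trace, Matrix.diag, Matrix.mul_apply, Matrix.conjTranspose_apply]
  push_cast
  refine Finset.sum_congr rfl fun a _ => Finset.sum_congr rfl fun b _ => ?_
  rw [← Complex.conj_mul']
  rfl

theorem frobSq_unitary {n : ℕ} (M U V : Matrix (Fin n) (Fin n) ℂ) (hU : U * Uᴴ = 1)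
    (hV : V * Vᴴ = 1) :
    ∑ a, ∑ b, ‖(Uᴴ * M * V) a b‖ ^ 2 = ∑ a, ∑ b, ‖M a b‖ ^ 2 := by
  have h : ((∑ a, ∑ b, ‖(Uᴴ * M * V) a b‖ ^ 2 : ℝ) : ℂ)
      = ((∑ a, ∑ b, ‖M a b‖ ^ 2 : ℝ) : ℂ) := by
    rw [frobSq_eq, frobSq_eq]
    have : (Uᴴ * M * V)ᴴ * (Uᴴ * M * V) = Vᴴ * (Mᴴ * ((U * Uᴴ) * M) * V) := by
      simp only [Matrix.conjTranspose_mul, Matrix.conjTranspose_conjTranspose, Matrix.mul_assoc]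
    rw [this, hU, Matrix.one_mul, Matrix.trace_mul_comm, Matrix.mul_assoc, hV, Matrix.mul_one]
  exact_mod_cast h

theorem frobSq_key {n : ℕ} (U V : Matrix (Fin n) (Fin n) ℂ) (hU : U ∈ Matrix.unitaryGroup (Fin n) ℂ)
    (hV : V ∈ Matrix.unitaryGroup (Fin n) ℂ) (a m : Fin n → ℝ) :
    ∑ i, ∑ j, ‖(U * Matrix.diagonal (fun i => (a i : ℂ)) * Uᴴ
      - V * Matrix.diagonal (fun i => (m i : ℂ)) * Vᴴ) i j‖ ^ 2
    = ∑ i, ∑ j, ‖(Uᴴ * V) i j‖ ^ 2 * (a i - m j) ^ 2 := by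
  have hU1 : U * Uᴴ = 1 := Matrix.mem_unitaryGroup_iff.mp hU
  have hV1 : V * Vᴴ = 1 := Matrix.mem_unitaryGroup_iff.mp hV
  have hU2 : Uᴴ * U = 1 := Matrix.mem_unitaryGroup_iff'.mp hU
  have hV2 : Vᴴ * V = 1 := Matrix.mem_unitaryGroup_iff'.mp hV
  rw [← frobSq_unitary _ U V hU1 hV1]
  have : Uᴴ * (U * Matrix.diagonal (fun i => (a i : ℂ)) * Uᴴ
      - V * Matrix.diagonal (fun i => (m i : ℂ)) * Vᴴ) * V
      = Matrix.diagonal (fun i => (a i : ℂ)) * (Uᴴ * V)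
        - (Uᴴ * V) * Matrix.diagonal (fun i => (m i : ℂ)) := by
    have e1 : Uᴴ * (U * Matrix.diagonal (fun i => (a i : ℂ)) * Uᴴ) * V
      = (Uᴴ * U) * Matrix.diagonal (fun i => (a i : ℂ)) * (Uᴴ * V) := by
      simp only [Matrix.mul_assoc]
    have e2 : Uᴴ * (V * Matrix.diagonal (fun i => (m i : ℂ)) * Vᴴ) * V
      = (Uᴴ * V) * Matrix.diagonal (fun i => (m i : ℂ)) * (Vᴴ * V) := by
      simp only [Matrix.mul_assoc]
    rw [Matrix.mul_sub, Matrix.sub_mul, e1, e2, hU2, hV2, Matrix.one_mul, Matrix.mul_one]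
  rw [this]
  refine Finset.sum_congr rfl fun i _ => Finset.sum_congr rfl fun j _ => ?_
  rw [Matrix.sub_apply, Matrix.diagonal_mul, Matrix.mul_diagonal, mul_comm, ← mul_sub, norm_mul,
    mul_pow, ← Complex.ofReal_sub, Complex.norm_real, Real.norm_eq_abs, sq_abs]

theorem unitary_ds {n : ℕ} (W : Matrix (Fin n) (Fin n) ℂ) (h1 : W * Wᴴ = 1) (h2 : Wᴴ * W = 1) :
    Matrix.of (fun i j => ‖W i j‖ ^ 2) ∈ doublyStochastic ℝ (Fin n) := by
  rw [mem_doublyStochastic_iff_sum]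
  refine ⟨fun i j => by simp, fun i => ?_, fun j => ?_⟩
  · have h := congrFun (congrFun h1 i) i
    rw [Matrix.mul_apply, Matrix.one_apply_eq] at h
    have : ((∑ j, ‖W i j‖ ^ 2 : ℝ) : ℂ) = 1 := by
      rw [← h]
      push_cast
      refine Finset.sum_congr rfl fun b _ => ?_
      rw [← Complex.mul_conj']
      rfl
    exact_mod_cast this
  · have h := congrFun (congrFun h2 j) j
    rw [Matrix.mul_apply, Matrix.one_apply_eq] at h
    have : ((∑ i, ‖W i j‖ ^ 2 : ℝ) : ℂ) = 1 := by
      rw [← h]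
      push_cast
      refine Finset.sum_congr rfl fun b _ => ?_
      rw [← Complex.conj_mul']
      rfl
    exact_mod_cast this

theorem ds_rearr {n : ℕ} (D : Matrix (Fin n) (Fin n) ℝ) (hD : D ∈ doublyStochastic ℝ (Fin n))
    (a m : Fin n → ℝ) (ha : Monotone a) (hm : Monotone m) :
    ∑ i, ∑ j, D i j * (a i * m j) ≤ ∑ i, a i * m i := by
  obtain ⟨w, hw0, hw1, hw⟩ := exists_eq_sum_perm_of_mem_doublyStochastic hD
  have hσ : ∀ σ : Equiv.Perm (Fin n), ∑ i, ∑ j, (σ.permMatrix ℝ) i j * (a i * m j)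
      = ∑ i, a i * m (σ i) := by
    intro σ
    refine Finset.sum_congr rfl fun i _ => ?_
    simp [Equiv.Perm.permMatrix, PEquiv.toMatrix_apply]
  have hmv : Monovary a m := ha.monovary hm
  calc ∑ i, ∑ j, D i j * (a i * m j)
      = ∑ i, ∑ j, ∑ σ, w σ * ((σ.permMatrix ℝ) i j * (a i * m j)) := by
        refine Finset.sum_congr rfl fun i _ => Finset.sum_congr rfl fun j _ => ?_
        rw [← hw, Matrix.sum_apply, Finset.sum_mul]
        refine Finset.sum_congr rfl fun σ _ => ?_
        rw [Matrix.smul_apply, smul_eq_mul, mul_assoc]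
    _ = ∑ σ, w σ * ∑ i, ∑ j, (σ.permMatrix ℝ) i j * (a i * m j) := by
        simp_rw [Finset.mul_sum]
        conv_rhs => rw [Finset.sum_comm]
        refine Finset.sum_congr rfl fun i _ => ?_
        rw [Finset.sum_comm]
    _ ≤ ∑ σ, w σ * ∑ i, a i * m i := by
        refine Finset.sum_le_sum fun σ _ => mul_le_mul_of_nonneg_left ?_ (hw0 σ)
        rw [hσ]
        exact hmv.sum_mul_comp_perm_le_sum_mul
    _ = ∑ i, a i * m i := by rw [← Finset.sum_mul, hw1, one_mul]

theorem ds_expand {n : ℕ} (D : Matrix (Fin n) (Fin n) ℝ) (hD : D ∈ doublyStochastic ℝ (Fin n))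
    (a m : Fin n → ℝ) :
    ∑ i, ∑ j, D i j * (a i - m j) ^ 2
      = ∑ i, a i ^ 2 + ∑ i, m i ^ 2 - 2 * ∑ i, ∑ j, D i j * (a i * m j) := by
  obtain ⟨-, hr, hc⟩ := mem_doublyStochastic_iff_sum.mp hD
  have h1 : ∑ i, a i ^ 2 = ∑ i, ∑ j, D i j * a i ^ 2 := by
    refine Finset.sum_congr rfl fun i _ => ?_
    rw [← Finset.sum_mul, hr, one_mul]
  have h2 : ∑ j, m j ^ 2 = ∑ i, ∑ j, D i j * m j ^ 2 := by
    rw [Finset.sum_comm]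
    refine Finset.sum_congr rfl fun i _ => ?_
    rw [← Finset.sum_mul, hc, one_mul]
  rw [h1, h2, Finset.mul_sum, ← Finset.sum_add_distrib, ← Finset.sum_sub_distrib]
  refine Finset.sum_congr rfl fun i _ => ?_
  rw [Finset.mul_sum, ← Finset.sum_add_distrib, ← Finset.sum_sub_distrib]
  refine Finset.sum_congr rfl fun j _ => ?_
  ring

theorem eigs_mono {n : ℕ} (H : Matrix (Fin n) (Fin n) ℂ) : Monotone (eigs H) := by
  unfold eigs
  split_ifs with h
  · exact Tuple.monotone_sort _
  · exact monotone_const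

theorem exists_diag {n : ℕ} (G : Matrix (Fin n) (Fin n) ℂ) (hG : G.IsHermitian) :
    ∃ V ∈ Matrix.unitaryGroup (Fin n) ℂ,
      G = V * Matrix.diagonal (fun i => (eigs G i : ℂ)) * Vᴴ := by
  set σ := Tuple.sort hG.eigenvalues with hσ
  set V : Matrix (Fin n) (Fin n) ℂ := hG.eigenvectorUnitary.1 with hV
  have hVu : V * Vᴴ = 1 := Matrix.mem_unitaryGroup_iff.mp hG.eigenvectorUnitary.2
  have hsp : G = V * Matrix.diagonal (fun i => (hG.eigenvalues i : ℂ)) * Vᴴ := by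
    conv_lhs => rw [hG.spectral_theorem, Unitary.conjStarAlgAut_apply]
    rfl
  refine ⟨V.submatrix id σ, ?_, ?_⟩
  · rw [Matrix.mem_unitaryGroup_iff]
    change V.submatrix id σ * (V.submatrix id σ)ᴴ = 1
    rw [Matrix.conjTranspose_submatrix, Matrix.submatrix_mul_equiv, hVu, Matrix.submatrix_id_id]
  · have : Matrix.diagonal (fun i => (eigs G i : ℂ))
        = (Matrix.diagonal (fun i => (hG.eigenvalues i : ℂ))).submatrix σ σ := by
      rw [Matrix.submatrix_diagonal_equiv]
      congr 1
      funext i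
      simp [eigs, hG, hσ]
    rw [this, Matrix.conjTranspose_submatrix, Matrix.submatrix_mul_equiv,
      Matrix.submatrix_mul_equiv, Matrix.submatrix_id_id, ← hsp]

theorem mono_unique {n : ℕ} (f g : Fin n → ℝ) (hf : Monotone f) (hg : Monotone g)
    (h : Multiset.map f Finset.univ.val = Multiset.map g Finset.univ.val) : f = g := by
  rw [Fin.univ_val_map, Fin.univ_val_map, Multiset.coe_eq_coe] at h
  exact List.ofFn_injective (h.eq_of_sortedLE hf.sortedLE_ofFn hg.sortedLE_ofFn)

theorem conj_diag_herm {n : ℕ} (U : Matrix (Fin n) (Fin n) ℂ) (m : Fin n → ℝ) :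
    (U * Matrix.diagonal (fun i => (m i : ℂ)) * Uᴴ).IsHermitian := by
  apply Matrix.isHermitian_mul_mul_conjTranspose
  rw [Matrix.isHermitian_diagonal_iff]
  intro i
  simp [isSelfAdjoint_iff]

theorem eigs_conj {n : ℕ} (U : Matrix (Fin n) (Fin n) ℂ) (hU : U ∈ Matrix.unitaryGroup (Fin n) ℂ)
    (m : Fin n → ℝ) (hm : Monotone m) :
    eigs (U * Matrix.diagonal (fun i => (m i : ℂ)) * Uᴴ) = m := by
  have hh := conj_diag_herm U m
  have hU2 : Uᴴ * U = 1 := Matrix.mem_unitaryGroup_iff'.mp hU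
  have h1 := hh.roots_charpoly_eq_eigenvalues
  have h2 : (U * Matrix.diagonal (fun i => (m i : ℂ)) * Uᴴ).charpoly.roots
      = Multiset.map (fun i => (m i : ℂ)) Finset.univ.val := by
    rw [Matrix.charpoly_mul_comm, ← Matrix.mul_assoc, hU2, Matrix.one_mul,
      Matrix.charpoly_diagonal, Polynomial.roots_prod]
    · simp
    · simp [Finset.prod_ne_zero_iff, Polynomial.X_sub_C_ne_zero]
  have h3 : Multiset.map hh.eigenvalues Finset.univ.val = Multiset.map m Finset.univ.val := by
    have := congrArg (Multiset.map Complex.re) (h1.symm.trans h2)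
    rw [Multiset.map_map, Multiset.map_map] at this
    exact this
  refine mono_unique _ _ (eigs_mono _) hm ?_
  rw [← h3]
  have : eigs (U * Matrix.diagonal (fun i => (m i : ℂ)) * Uᴴ)
      = hh.eigenvalues ∘ Tuple.sort hh.eigenvalues := by
    simp only [eigs, hh, dif_pos]
  rw [this, ← Multiset.map_map]
  congr 1
  exact congrArg Finset.val (Finset.map_univ_equiv (Tuple.sort hh.eigenvalues))

/-- Entries of `Λ_Σ`. -/
def mSig {n : ℕ} (k : ℕ) (l : Fin n → ℝ) (b : ℝ) : Fin n → ℝ :=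
  fun i => if (i : ℕ) < k then b else l i

theorem sum_ind {n k : ℕ} (hkn : k < n) (c : ℝ) :
    (∑ j : Fin n, if (j : ℕ) < k then c else 0) = k * c := by
  rw [Fin.sum_univ_eq_sum_range (fun j => if j < k then c else 0) n, ← Finset.sum_filter]
  have : (Finset.range n).filter (· < k) = Finset.range k := by
    ext x; simp; omega
  rw [this]; simp

theorem HSigma_unique_aux {n k : ℕ} (hk2 : 2 ≤ k) (hkn : k < n) (l : Fin n → ℝ) (hl : Monotone l)
    (k1 : Fin n) (hk1 : (k1 : ℕ) + 1 = k)
    (hgap : l k1 < l ⟨k, hkn⟩) (b : ℝ)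
    (hb : b = (∑ j : Fin n, if (j : ℕ) < k then l j else 0) / k) :
    b ≤ l k1 ∧ Monotone (mSig k l b) ∧
      (∃ ε : ℝ, 0 < ε ∧ Monotone (fun i => l i - ε * mSig k l b i)) ∧
      ∀ m : Fin n → ℝ, (∀ i j : Fin n, (i : ℕ) < k → (j : ℕ) < k → m i = m j) →
        ∑ i, (l i - m i) ^ 2 = ∑ i, (l i - mSig k l b i) ^ 2 + ∑ i, (mSig k l b i - m i) ^ 2 := by
  have hk0 : (0 : ℝ) < k := by exact_mod_cast (by omega : 0 < k)
  have hbk : (∑ j : Fin n, if (j : ℕ) < k then l j else 0) = k * b := by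
    rw [hb]; field_simp
  have hble : b ≤ l k1 := by
    have : (∑ j : Fin n, if (j : ℕ) < k then l j else 0)
        ≤ ∑ j : Fin n, if (j : ℕ) < k then l k1 else 0 := by
      refine Finset.sum_le_sum fun j _ => ?_
      split_ifs with h
      · exact hl (by rw [Fin.le_def]; show _ ≤ _; first | omega | (simp; omega))
      · exact le_rfl
    rw [hbk, sum_ind hkn] at this
    exact le_of_mul_le_mul_left this hk0
  set p := l k1 with hp
  set q := l ⟨k, hkn⟩ with hq
  have hlow : ∀ i : Fin n, (i : ℕ) < k → l i ≤ p := fun i h =>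
    hl (by rw [Fin.le_def]; show _ ≤ _; first | omega | (simp; omega))
  have hhigh : ∀ i : Fin n, ¬ (i : ℕ) < k → q ≤ l i := fun i h =>
    hl (by rw [Fin.le_def]; show _ ≤ _; first | omega | (simp; omega))
  refine ⟨hble, ?_, ?_, ?_⟩
  · intro i j hij
    have hij' : (i : ℕ) ≤ j := hij
    simp only [mSig]
    split_ifs with h1 h2 h2
    · exact le_rfl
    · linarith [hhigh j h2]
    · omega
    · exact hl hij
  · have hqb : 0 < q - b := by linarith
    have hε1 : (q - p) / (q - b) ≤ 1 := by rw [div_le_one hqb]; linarith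
    have hε : (q - p) / (q - b) * (q - b) = q - p := by field_simp
    refine ⟨(q - p) / (q - b), div_pos (by linarith) hqb, ?_⟩
    generalize (q - p) / (q - b) = e at hε1 hε
    intro i j hij
    have hij' : (i : ℕ) ≤ j := hij
    have hlij := hl hij
    simp only [mSig]
    split_ifs with h1 h2 h2
    · linarith
    · nlinarith [hhigh j h2, hlow i h1]
    · omega
    · nlinarith
  · intro m hm
    set c := m ⟨0, by omega⟩ with hc
    have hmc : ∀ i : Fin n, (i : ℕ) < k → m i = c := fun i h => hm _ _ h (by simp; omega)
    have hz : ∑ i, (l i - mSig k l b i) * (mSig k l b i - m i) = 0 := by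
      have : ∀ i : Fin n, (l i - mSig k l b i) * (mSig k l b i - m i)
          = ((if (i : ℕ) < k then l i else 0) - (if (i : ℕ) < k then b else 0)) * (b - c) := by
        intro i
        simp only [mSig]
        split_ifs with h
        · rw [hmc i h]
        · ring
      simp_rw [this]
      rw [← Finset.sum_mul, Finset.sum_sub_distrib, hbk, sum_ind hkn]
      ring
    have : ∑ i, (l i - m i) ^ 2 = ∑ i, (l i - mSig k l b i) ^ 2 + ∑ i, (mSig k l b i - m i) ^ 2
        + 2 * ∑ i, (l i - mSig k l b i) * (mSig k l b i - m i) := by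
      rw [Finset.mul_sum, ← Finset.sum_add_distrib, ← Finset.sum_add_distrib]
      refine Finset.sum_congr rfl fun i _ => ?_
      ring
    rw [this, hz]; ring

theorem real_core {n : ℕ} (D : Matrix (Fin n) (Fin n) ℝ) (hD : D ∈ doublyStochastic ℝ (Fin n))
    (l s m : Fin n → ℝ) (hl : Monotone l) (hm : Monotone m)
    (hε : ∃ ε : ℝ, 0 < ε ∧ Monotone (fun i => l i - ε * s i))
    (hpy : ∑ i, (l i - m i) ^ 2 = ∑ i, (l i - s i) ^ 2 + ∑ i, (s i - m i) ^ 2)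
    (hpos : 0 < ∑ i, ∑ j, D i j * (s i - m j) ^ 2) :
    ∑ i, (l i - s i) ^ 2 < ∑ i, ∑ j, D i j * (l i - m j) ^ 2 := by
  have hexp : ∀ u v : Fin n → ℝ,
      ∑ i, (u i - v i) ^ 2 = ∑ i, u i ^ 2 + ∑ i, v i ^ 2 - 2 * ∑ i, u i * v i := by
    intro u v
    rw [Finset.mul_sum, ← Finset.sum_add_distrib, ← Finset.sum_sub_distrib]
    exact Finset.sum_congr rfl fun i _ => by ring
  rw [ds_expand D hD] at hpos ⊢
  by_cases h : s = m
  · subst h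
    obtain ⟨ε, h0, hmon⟩ := hε
    have hr := ds_rearr D hD _ _ hmon hm
    have e1 : ∑ i, ∑ j, D i j * ((l i - ε * s i) * s j)
        = ∑ i, ∑ j, D i j * (l i * s j) - ε * ∑ i, ∑ j, D i j * (s i * s j) := by
      rw [Finset.mul_sum, ← Finset.sum_sub_distrib]
      refine Finset.sum_congr rfl fun i _ => ?_
      rw [Finset.mul_sum, ← Finset.sum_sub_distrib]
      exact Finset.sum_congr rfl fun j _ => by ring
    have e2 : ∑ i, (l i - ε * s i) * s i = ∑ i, l i * s i - ε * ∑ i, s i ^ 2 := by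
      rw [Finset.mul_sum, ← Finset.sum_sub_distrib]
      exact Finset.sum_congr rfl fun j _ => by ring
    rw [e1, e2] at hr
    rw [hexp]
    nlinarith
  · have hr := ds_rearr D hD _ _ hl hm
    have : 0 < ∑ i, (s i - m i) ^ 2 := by
      obtain ⟨i, hi⟩ := Function.ne_iff.mp h
      refine Finset.sum_pos' (fun i _ => sq_nonneg _) ⟨i, Finset.mem_univ _, ?_⟩
      have := sub_ne_zero.mpr hi
      positivity
    have := hexp l m
    linarith

/-- **`H_Σ` is the unique closest point of Σ_k to `H`:** `H_Σ ∈ Σ_k`, and every other point of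
`Σ_k` is strictly farther from `H` in Frobenius distance. -/
theorem HSigma_unique_closest {n k : ℕ} (hk2 : 2 ≤ k) (hkn : k < n)
    (H : Matrix (Fin n) (Fin n) ℂ) (hH : H.IsHermitian)
    (hgap : eigs H ⟨k - 1, by omega⟩ < eigs H ⟨k, hkn⟩)
    (U : Matrix (Fin n) (Fin n) ℂ) (hU : U ∈ Matrix.unitaryGroup (Fin n) ℂ)
    (hdiag : U⁻¹ * H * U = Matrix.diagonal fun i => (eigs H i : ℂ)) :
    U * LambdaSigma k H * U⁻¹ ∈ SigmaSet n k ∧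
    ∀ G ∈ SigmaSet n k, G ≠ U * LambdaSigma k H * U⁻¹ →
      frobNorm (H - U * LambdaSigma k H * U⁻¹) < frobNorm (H - G) := by
  have hU1 : U * Uᴴ = 1 := Matrix.mem_unitaryGroup_iff.mp hU
  have hU2 : Uᴴ * U = 1 := Matrix.mem_unitaryGroup_iff'.mp hU
  have hinv : U⁻¹ = Uᴴ := Matrix.inv_eq_left_inv hU2
  rw [hinv] at hdiag ⊢
  have hHd : H = U * Matrix.diagonal (fun i => (eigs H i : ℂ)) * Uᴴ := by
    rw [← hdiag]
    calc H = (U * Uᴴ) * H * (U * Uᴴ) := by rw [hU1, Matrix.one_mul, Matrix.mul_one]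
      _ = _ := by simp only [Matrix.mul_assoc]
  have hl := eigs_mono H
  set l := eigs H with hldef
  set s := mSig k l (lamBar k H) with hs
  have hLS : LambdaSigma k H = Matrix.diagonal (fun i => (s i : ℂ)) := by
    unfold LambdaSigma
    congr 1
    funext i
    simp only [hs, mSig]
    split_ifs <;> rfl
  obtain ⟨hble, hsm, hε, hpy⟩ := HSigma_unique_aux hk2 hkn l hl _ (by simp; omega) hgap (lamBar k H) rfl
  rw [hLS]
  refine ⟨⟨conj_diag_herm U s, ?_, ?_⟩, ?_⟩
  · intro i j hi hj
    rw [eigs_conj U hU s hsm]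
    simp only [hs, mSig, if_pos hi, if_pos hj]
  · intro i j hi hj
    rw [eigs_conj U hU s hsm]
    have hj' : j = ⟨k, hkn⟩ := Fin.ext hj
    subst hj'
    simp only [hs, mSig, if_pos hi, lt_irrefl, if_false]
    linarith
  · rintro G ⟨hG, hGeq, -⟩ hne
    obtain ⟨V, hV, hGd⟩ := exists_diag G hG
    have hW : Uᴴ * V ∈ Matrix.unitaryGroup (Fin n) ℂ := mul_mem (Unitary.star_mem hU) hV
    have hD := unitary_ds (Uᴴ * V) (Matrix.mem_unitaryGroup_iff.mp hW)
      (Matrix.mem_unitaryGroup_iff'.mp hW)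
    have kHG := frobSq_key U V hU hV l (eigs G)
    have kSG := frobSq_key U V hU hV s (eigs G)
    have kHS := frobSq_key U U hU hU l s
    rw [← hHd, ← hGd] at kHG
    rw [← hGd] at kSG
    rw [← hHd, hU2] at kHS
    have kHS' : ∑ i, ∑ j, ‖(1 : Matrix (Fin n) (Fin n) ℂ) i j‖ ^ 2 * (l i - s j) ^ 2
        = ∑ i, (l i - s i) ^ 2 := by
      refine Finset.sum_congr rfl fun i _ => ?_
      rw [Finset.sum_eq_single i]
      · simp
      · intro j _ hj
        simp [Matrix.one_apply_ne hj.symm]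
      · simp
    rw [kHS'] at kHS
    unfold frobNorm
    apply Real.sqrt_lt_sqrt
    · positivity
    rw [kHS, kHG]
    refine real_core _ hD l s (eigs G) hl (eigs_mono G) hε (hpy _ hGeq) ?_
    refine lt_of_lt_of_eq ?_ kSG
    by_contra hcon
    apply hne
    have h0 : ∑ i, ∑ j, ‖(U * Matrix.diagonal (fun i => (s i : ℂ)) * Uᴴ - G) i j‖ ^ 2 = 0 :=
      le_antisymm (not_lt.mp hcon) (by positivity)
    symm
    rw [← sub_eq_zero]
    ext i j
    rw [Finset.sum_eq_zero_iff_of_nonneg (fun i _ => by positivity)] at h0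
    have h1 := h0 i (Finset.mem_univ _)
    rw [Finset.sum_eq_zero_iff_of_nonneg (fun i _ => by positivity)] at h1
    have h2 := h1 j (Finset.mem_univ _)
    simpa using h2

end
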